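/- Suppose E and F are Banach spaces and let T: Lip(X,E) → Lip(Y,F) be a linear biseparating map. If Y has no isolated points, then T is continuous. -/

import Mathlib

/-!
The proof applies the closed graph theorem to `T`, viewed as a linear map between the Banach spaces
`Lip(X,E)` and `Lip(Y,F)`.

By linearity it is enough to show that if `f n → 0` in `Lip(X,E)` and `T (f n) → g` pointwise with
`g` continuous, then `g = 0` (`eq_zero_of_tendsto`). If `g ≠ 0`, the open set `coz g` is infinite,
because `Y` has no isolated points, so it contains a sequence of pairwise disjoint nonempty open
sets. Bump functions in these pull back under `T` to functions with pairwise disjoint cozero sets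
`U k`. Let `φ k` be a Lipschitz cutoff supported in `U k` and equal to `1` on a smaller open set.
Biseparation provides a point `y k ∈ coz g` at which `T (φ k • f n)` and `T (f n)` agree for every
`n` (`exists_localization`). Hence `T (φ k • f n) (y k) → g (y k) ≠ 0`, while `φ k • f n → 0` in
norm as `n → ∞` for fixed `k`; after choosing `n` large and rescaling, one gets functions `G k` of
norm at most `1` with pairwise disjoint cozero sets and `‖T (G k) (y k)‖ ≥ k`. But such a sequence
can be glued to a single Lipschitz function `H` (`exists_glue`), and `T H = T (G k)` on
`coz (T (G k))`, so the values of all the `T (G k)` are bounded by the sup norm of `T H`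
(`exists_bound_of_disjoint`): a contradiction.
-/

open Metric Set Function Bornology
open scoped NNReal

/-- `f` is a bounded Lipschitz function. -/
def IsLip {X E : Type*} [PseudoMetricSpace X] [NormedAddCommGroup E] (f : X → E) : Prop :=
  (∃ K : ℝ≥0, LipschitzWith K f) ∧ ∃ C : ℝ, ∀ x, ‖f x‖ ≤ C

/-- The cozero set of `f`. -/
def coz {X E : Type*} [Zero E] (f : X → E) : Set X := {x | f x ≠ 0}

/-- The norm `‖f‖_L = max {‖f‖_∞, L(f)}` on bounded Lipschitz functions. -/
noncomputable def lipNorm {X E : Type*} [PseudoMetricSpace X] [NormedAddCommGroup E]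
    (f : X → E) : ℝ :=
  max (⨆ x, ‖f x‖) (⨆ p : X × X, ‖f p.1 - f p.2‖ / dist p.1 p.2)

/-- `T` is a linear biseparating map from `Lip(X,E)` onto `Lip(Y,F)`:
it maps bounded Lipschitz functions to bounded Lipschitz functions, is linear,
restricts to a bijection between the spaces of bounded Lipschitz functions, and
both `T` and its inverse are separating (disjointness preserving). -/
structure IsBisep (𝕂 : Type*) {X Y E F : Type*} [RCLike 𝕂]
    [PseudoMetricSpace X] [PseudoMetricSpace Y]
    [NormedAddCommGroup E] [NormedSpace 𝕂 E] [NormedAddCommGroup F] [NormedSpace 𝕂 F]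
    (T : (X → E) → (Y → F)) : Prop where
  maps_lip : ∀ f, IsLip f → IsLip (T f)
  map_add : ∀ f g, IsLip f → IsLip g → T (f + g) = T f + T g
  map_smul : ∀ (c : 𝕂) (f : X → E), IsLip f → T (c • f) = c • T f
  inj : ∀ f g, IsLip f → IsLip g → T f = T g → f = g
  surj : ∀ g, IsLip g → ∃ f, IsLip f ∧ T f = g
  sep : ∀ f g, IsLip f → IsLip g → coz f ∩ coz g = ∅ → coz (T f) ∩ coz (T g) = ∅
  sep_inv : ∀ f g, IsLip f → IsLip g → coz (T f) ∩ coz (T g) = ∅ → coz f ∩ coz g = ∅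

open Filter Topology

/-! ### Bounded Lipschitz functions -/

/-- `‖f‖_L ≤ M`, spelled out pointwise. -/
def LipBd {X E : Type*} [PseudoMetricSpace X] [NormedAddCommGroup E] (M : ℝ) (f : X → E) : Prop :=
  (∀ x, ‖f x‖ ≤ M) ∧ ∀ x x', ‖f x - f x'‖ ≤ M * dist x x'

section Basic

variable {X E : Type*} [PseudoMetricSpace X] [NormedAddCommGroup E]

lemma LipBd.isLip {M : ℝ} {f : X → E} (h : LipBd M f) : IsLip f := by
  refine ⟨⟨M.toNNReal, LipschitzWith.of_dist_le_mul fun x y => ?_⟩, M, h.1⟩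
  rw [dist_eq_norm]
  exact (h.2 x y).trans (mul_le_mul_of_nonneg_right (Real.le_coe_toNNReal M) dist_nonneg)

lemma IsLip.exists_lipBd {f : X → E} (h : IsLip f) : ∃ M, 0 ≤ M ∧ LipBd M f := by
  obtain ⟨⟨K, hK⟩, C, hC⟩ := h
  refine ⟨max K C, le_max_of_le_left K.2, fun x => (hC x).trans (le_max_right _ _),
    fun x y => ?_⟩
  have := hK.dist_le_mul x y
  rw [dist_eq_norm] at this
  exact this.trans (mul_le_mul_of_nonneg_right (le_max_left _ _) dist_nonneg)

lemma LipBd.mono {M N : ℝ} {f : X → E} (h : LipBd M f) (hMN : M ≤ N) : LipBd N f :=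
  ⟨fun x => (h.1 x).trans hMN,
    fun x y => (h.2 x y).trans (mul_le_mul_of_nonneg_right hMN dist_nonneg)⟩

lemma LipBd.add {M N : ℝ} {f g : X → E} (hf : LipBd M f) (hg : LipBd N g) :
    LipBd (M + N) (f + g) := by
  refine ⟨fun x => (norm_add_le _ _).trans (add_le_add (hf.1 x) (hg.1 x)), fun x y => ?_⟩
  have : (f + g) x - (f + g) y = (f x - f y) + (g x - g y) := by
    simp only [Pi.add_apply]; abel
  rw [this, add_mul]
  exact (norm_add_le _ _).trans (add_le_add (hf.2 x y) (hg.2 x y))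

lemma LipBd.smul {𝕂 : Type*} [RCLike 𝕂] [NormedSpace 𝕂 E] {M : ℝ} {f : X → E} (hf : LipBd M f)
    (c : 𝕂) : LipBd (‖c‖ * M) (c • f) := by
  refine ⟨fun x => ?_, fun x y => ?_⟩
  · rw [Pi.smul_apply, norm_smul]
    exact mul_le_mul_of_nonneg_left (hf.1 x) (norm_nonneg _)
  · rw [Pi.smul_apply, Pi.smul_apply, ← smul_sub, norm_smul, mul_assoc]
    exact mul_le_mul_of_nonneg_left (hf.2 x y) (norm_nonneg _)

lemma IsLip.add {f g : X → E} (hf : IsLip f) (hg : IsLip g) : IsLip (f + g) := by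
  obtain ⟨M, -, hM⟩ := hf.exists_lipBd
  obtain ⟨N, -, hN⟩ := hg.exists_lipBd
  exact (hM.add hN).isLip

lemma IsLip.smul {𝕂 : Type*} [RCLike 𝕂] [NormedSpace 𝕂 E] {f : X → E} (hf : IsLip f) (c : 𝕂) :
    IsLip (c • f) := by
  obtain ⟨M, -, hM⟩ := hf.exists_lipBd
  exact (hM.smul c).isLip

lemma IsLip.neg {f : X → E} (hf : IsLip f) : IsLip (-f) := by
  obtain ⟨M, -, hM⟩ := hf.exists_lipBd
  refine LipBd.isLip (M := M) ⟨fun x => by simpa using hM.1 x, fun x y => ?_⟩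
  have : (-f) x - (-f) y = -(f x - f y) := by simp only [Pi.neg_apply]; abel
  rw [this, norm_neg]
  exact hM.2 x y

lemma IsLip.sub {f g : X → E} (hf : IsLip f) (hg : IsLip g) : IsLip (f - g) := by
  rw [sub_eq_add_neg]; exact hf.add hg.neg

/-- A real cutoff acts on `E`-valued functions by scalar multiplication through `𝕂`. -/
lemma LipBd.cutoff_smul {𝕂 : Type*} [RCLike 𝕂] [NormedSpace 𝕂 E] {M : ℝ} {K : ℝ≥0} {f : X → E}
    {φ : X → ℝ} (hf : LipBd M f) (hφ : LipschitzWith K φ) (h1 : ∀ x, |φ x| ≤ 1) :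
    LipBd (M * (1 + K)) (fun x => (φ x : 𝕂) • f x) := by
  have hK : (0 : ℝ) ≤ K := K.2
  refine ⟨fun x => ?_, fun x y => ?_⟩
  · have hM : 0 ≤ M := (norm_nonneg _).trans (hf.1 x)
    rw [norm_smul, RCLike.norm_ofReal]
    nlinarith [mul_le_mul (h1 x) (hf.1 x) (norm_nonneg _) zero_le_one, mul_nonneg hM hK]
  · have hM : 0 ≤ M := (norm_nonneg _).trans (hf.1 x)
    have e : (φ x : 𝕂) • f x - (φ y : 𝕂) • f y
        = (φ x : 𝕂) • (f x - f y) + ((φ x - φ y : ℝ) : 𝕂) • f y := by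
      push_cast; rw [smul_sub, sub_smul]; abel
    have h2 := hφ.dist_le_mul x y
    rw [Real.dist_eq] at h2
    rw [e]
    refine (norm_add_le _ _).trans ?_
    rw [norm_smul, norm_smul, RCLike.norm_ofReal, RCLike.norm_ofReal]
    have h3 := mul_le_mul (h1 x) (hf.2 x y) (norm_nonneg _) zero_le_one
    have h4 := mul_le_mul h2 (hf.1 y) (norm_nonneg _) (mul_nonneg hK dist_nonneg)
    linarith

lemma exists_cutoff {U : Set X} (hU : IsOpen U) {x : X} (hx : x ∈ U) :
    ∃ (φ : X → ℝ) (K : ℝ≥0) (W : Set X), LipschitzWith K φ ∧ (∀ z, |φ z| ≤ 1) ∧ IsOpen W ∧ x ∈ W ∧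
      (∀ z ∈ W, φ z = 1) ∧ W ⊆ U ∧ ∀ z, z ∉ U → φ z = 0 := by
  obtain ⟨r, hr, hrU⟩ := Metric.isOpen_iff.1 hU x hx
  have hd : LipschitzWith (2 / r).toNNReal fun z => (2 / r) * dist z x := by
    refine LipschitzWith.of_dist_le_mul fun a b => ?_
    rw [Real.dist_eq, ← mul_sub, abs_mul, Real.coe_toNNReal _ (by positivity),
      abs_of_pos (by positivity : 0 < 2 / r)]
    exact mul_le_mul_of_nonneg_left (abs_dist_sub_le a b x) (by positivity)
  have hd' := (((LipschitzWith.const (α := X) (2 : ℝ)).sub hd).const_min 1).const_max 0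
  refine ⟨_, _, ball x (r / 2), hd', fun z => ?_, isOpen_ball, mem_ball_self (by positivity),
    fun z hz => ?_, (ball_subset_ball (by linarith)).trans hrU, fun z hz => ?_⟩
  · rw [abs_of_nonneg (le_max_left _ _)]
    exact max_le zero_le_one (min_le_left _ _)
  · have h1 : 2 / r * dist z x ≤ 1 := by
      rw [mem_ball] at hz
      rw [div_mul_eq_mul_div, div_le_one hr]; linarith
    rw [min_eq_left (by linarith), max_eq_right zero_le_one]
  · have h1 : 2 ≤ 2 / r * dist z x := by
      have : ¬ dist z x < r := fun h => hz (hrU h)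
      rw [div_mul_eq_mul_div, le_div_iff₀ hr]; nlinarith
    exact max_eq_left (min_le_of_right_le (by linarith))

lemma exists_bump (𝕂 : Type*) [RCLike 𝕂] [NormedSpace 𝕂 E] [Nontrivial E] {U : Set X}
    (hU : IsOpen U) {x : X} (hx : x ∈ U) :
    ∃ f : X → E, IsLip f ∧ f x ≠ 0 ∧ coz f ⊆ U := by
  obtain ⟨φ, K, W, hφ, h1, -, hxW, hW, -, h0⟩ := exists_cutoff hU hx
  obtain ⟨e, he⟩ := exists_ne (0 : E)
  have hc : LipBd ‖e‖ (fun _ : X => e) :=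
    ⟨fun _ => le_rfl, fun x y => by simpa using mul_nonneg (norm_nonneg e) dist_nonneg⟩
  refine ⟨_, (hc.cutoff_smul (𝕂 := 𝕂) hφ h1).isLip, ?_, fun z hz => ?_⟩
  · simpa [hW x hxW] using he
  · by_contra hzU
    exact hz (by simp [h0 z hzU])

/-- Functions of norm at most `1` with pairwise disjoint cozero sets glue to a Lipschitz function,
namely their pointwise sum. The Lipschitz bound `2` holds however close the cozero sets are:
if `x ∈ coz (F j)` and `y ∈ coz (F k)` with `j ≠ k`, then `F j y = 0` and `F k x = 0`, so both
`‖F j x‖` and `‖F k y‖` are at most `d(x, y)`. -/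
lemma exists_glue (F : ℕ → X → E) (hF : ∀ k, LipBd 1 (F k))
    (hd : ∀ j k, j ≠ k → coz (F j) ∩ coz (F k) = ∅) :
    ∃ G : X → E, IsLip G ∧ ∀ k x, F k x ≠ 0 → G x = F k x := by
  classical
  have huniq : ∀ {j k x}, F j x ≠ 0 → F k x ≠ 0 → j = k := by
    intro j k x hj hk
    by_contra hne
    have : x ∈ coz (F j) ∩ coz (F k) := ⟨hj, hk⟩
    rw [hd j k hne] at this
    exact this
  obtain ⟨G, hG⟩ : ∃ G : X → E, ∀ x, ((∃ k, F k x ≠ 0) → ∃ k, F k x ≠ 0 ∧ G x = F k x) ∧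
      ((∀ k, F k x = 0) → G x = 0) := by
    have : ∀ x, ∃ v : E, ((∃ k, F k x ≠ 0) → ∃ k, F k x ≠ 0 ∧ v = F k x) ∧
      ((∀ k, F k x = 0) → v = 0) := by
      intro x
      by_cases h : ∃ k, F k x ≠ 0
      · obtain ⟨k, hk⟩ := h
        exact ⟨F k x, fun _ => ⟨k, hk, rfl⟩, fun h => h k⟩
      · exact ⟨0, fun h' => absurd h' h, fun _ => rfl⟩
    choose G hG using this
    exact ⟨G, hG⟩
  have hGk : ∀ k x, F k x ≠ 0 → G x = F k x := by
    intro k x hk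
    obtain ⟨j, hj, e⟩ := (hG x).1 ⟨k, hk⟩
    rw [e, huniq hj hk]
  have hone : ∀ k x y, ‖F k x - F k y‖ ≤ dist x y := fun k x y => by simpa using (hF k).2 x y
  have hdich : ∀ x, (∃ k, F k x ≠ 0) ∨ ∀ k, F k x = 0 := fun x => by
    by_cases h : ∃ k, F k x ≠ 0
    · exact Or.inl h
    · exact Or.inr fun k => by_contra fun hk => h ⟨k, hk⟩
  refine ⟨G, LipBd.isLip (M := 2) ⟨fun x => ?_, fun x y => ?_⟩, hGk⟩
  · rcases hdich x with ⟨k, hk⟩ | h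
    · rw [hGk k x hk]; exact ((hF k).1 x).trans (by norm_num)
    · rw [(hG x).2 h]; simp
  · have hxy : 0 ≤ dist x y := dist_nonneg
    rcases hdich x with ⟨j, hj⟩ | hx <;> rcases hdich y with ⟨k, hk⟩ | hy
    · rw [hGk j x hj, hGk k y hk]
      by_cases hjk : j = k
      · subst hjk; linarith [hone j x y]
      · have h1 : F j y = 0 := by
          by_contra h; exact hjk (huniq h hk)
        have h2 : F k x = 0 := by
          by_contra h; exact hjk (huniq hj h)
        have h3 := hone j x y
        have h4 := hone k x y
        rw [h1, sub_zero] at h3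
        rw [h2, zero_sub, norm_neg] at h4
        linarith [norm_sub_le (F j x) (F k y)]
    · rw [hGk j x hj, (hG y).2 hy, ← hy j]; linarith [hone j x y]
    · rw [hGk k y hk, (hG x).2 hx, ← hx k]; linarith [hone k x y]
    · rw [(hG x).2 hx, (hG y).2 hy]; simp

end Basic

/-! ### Consequences of disjointness preservation -/

section Bisep

variable {𝕂 X Y E F : Type*} [RCLike 𝕂] [MetricSpace X] [MetricSpace Y]
  [NormedAddCommGroup E] [NormedSpace 𝕂 E] [NormedAddCommGroup F] [NormedSpace 𝕂 F]
  {T : (X → E) → (Y → F)}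

lemma IsBisep.map_sub (hT : IsBisep 𝕂 T) {f g : X → E} (hf : IsLip f) (hg : IsLip g) :
    T (f - g) = T f - T g := by
  have := hT.map_add (f - g) g (hf.sub hg) hg
  rw [sub_add_cancel] at this
  rw [this, add_sub_cancel_right]

lemma IsBisep.map_zero (hT : IsBisep 𝕂 T) : T 0 = 0 := by
  have h0 : IsLip (0 : X → E) :=
    LipBd.isLip (M := 0) ⟨fun x => by simp, fun x y => by simp⟩
  have := hT.map_sub h0 h0
  simpa using this

/-- If `f - g` is disjoint from `w`, then `T f` and `T g` agree on `coz (T w)`. -/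
lemma IsBisep.eq_on_coz (hT : IsBisep 𝕂 T) {f g w : X → E} (hf : IsLip f) (hg : IsLip g)
    (hw : IsLip w) (h : coz (f - g) ∩ coz w = ∅) {y : Y} (hy : T w y ≠ 0) : T f y = T g y := by
  have h1 := hT.sep _ _ (hf.sub hg) hw h
  rw [hT.map_sub hf hg] at h1
  by_contra hne
  have : y ∈ coz (T f - T g) ∩ coz (T w) := ⟨sub_ne_zero.2 hne, hy⟩
  rw [h1] at this
  exact this

/-- If `H` glues the functions `G k`, then `H - G k` is disjoint from `G k`, so `T H` and `T (G k)`
agree on `coz (T (G k))`, and any bound for `T H` bounds every `T (G k)`. -/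
lemma IsBisep.exists_bound_of_disjoint (hT : IsBisep 𝕂 T) (G : ℕ → X → E)
    (hG : ∀ k, LipBd 1 (G k)) (hd : ∀ j k, j ≠ k → coz (G j) ∩ coz (G k) = ∅) :
    ∃ C : ℝ, ∀ k y, ‖T (G k) y‖ ≤ C := by
  obtain ⟨H, hH, hHG⟩ := exists_glue G hG hd
  obtain ⟨C, hC0, hC⟩ := (hT.maps_lip H hH).exists_lipBd
  refine ⟨C, fun k y => ?_⟩
  by_cases hy : T (G k) y = 0
  · rw [hy, norm_zero]; exact hC0
  · have hdis : coz (H - G k) ∩ coz (G k) = ∅ := by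
      ext x
      simp only [coz, mem_inter_iff, mem_ofPred_eq, Pi.sub_apply, mem_empty_iff_false, iff_false,
        not_and, not_not]
      intro h
      by_contra hx
      exact h (by rw [hHG k x hx, sub_self])
    rw [← hT.eq_on_coz hH (hG k).isLip (hG k).isLip hdis hy]
    exact hC.1 y

/-- Given `p` with `p ≠ 0`, there are a cutoff `φ` supported in `coz p` and a point `y ∈ coz (T p)`
such that, for every `f`, multiplying `f` by `φ` does not change the value of its image at `y`. -/
lemma IsBisep.exists_localization [Nontrivial E] (hT : IsBisep 𝕂 T) {p : X → E} (hp : IsLip p)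
    (hp0 : p ≠ 0) :
    ∃ (φ : X → ℝ) (K : ℝ≥0) (y : Y), LipschitzWith K φ ∧ (∀ z, |φ z| ≤ 1) ∧
      (∀ z, p z = 0 → φ z = 0) ∧ T p y ≠ 0 ∧
      ∀ f, IsLip f → T (fun x => (φ x : 𝕂) • f x) y = T f y := by
  obtain ⟨x, hx⟩ := Function.ne_iff.1 hp0
  obtain ⟨⟨K', hK'⟩, -⟩ := id hp
  have hopen : IsOpen (coz p) := isOpen_ne_fun hK'.continuous continuous_const
  obtain ⟨φ, K, W, hφ, h1, hWo, hxW, hW, -, h0⟩ := exists_cutoff hopen hx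
  obtain ⟨w, hw, hwx, hwW⟩ := exists_bump (E := E) 𝕂 hWo hxW
  have hne : coz (T w) ∩ coz (T p) ≠ ∅ := by
    intro h
    have h2 := hT.sep_inv w p hw hp h
    have : x ∈ coz w ∩ coz p := ⟨hwx, hx⟩
    rw [h2] at this
    exact this
  obtain ⟨y, hyw, hyp⟩ := nonempty_iff_ne_empty.2 hne
  refine ⟨φ, K, y, hφ, h1, fun z hz => h0 z (fun h => h hz), hyp, fun f hf => ?_⟩
  obtain ⟨M, -, hM⟩ := hf.exists_lipBd
  refine hT.eq_on_coz (hM.cutoff_smul (𝕂 := 𝕂) hφ h1).isLip hf hw ?_ hyw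
  ext z
  simp only [coz, mem_inter_iff, mem_ofPred_eq, Pi.sub_apply, mem_empty_iff_false, iff_false,
    not_and, not_not]
  intro h
  by_contra hz
  exact h (by simp [hW z (hwW hz)])

lemma exists_seq_disjoint_open (hY : ∀ y : Y, ¬ IsOpen ({y} : Set Y)) {V : Set Y} (hV : IsOpen V)
    (hne : V.Nonempty) :
    ∃ U : ℕ → Set Y, (∀ n, IsOpen (U n)) ∧ (∀ n, (U n).Nonempty) ∧ (∀ n, U n ⊆ V) ∧
      ∀ j k, j ≠ k → Disjoint (U j) (U k) := by
  obtain ⟨y, hy⟩ := hne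
  have : NeBot (𝓝[≠] y) := ⟨fun h => hY y ((isOpen_singleton_iff_punctured_nhds y).2 h)⟩
  have hinf : V.Infinite := infinite_of_mem_nhds y (hV.mem_nhds hy)
  have : Infinite V := hinf.to_subtype
  obtain ⟨U, hUi, hUo, hUd⟩ := exists_seq_infinite_isOpen_pairwise_disjoint V
  exact ⟨fun n => (↑) '' U n, fun n => hV.isOpenMap_subtype_val _ (hUo n),
    fun n => (hUi n).nonempty.image _, fun n => Subtype.coe_image_subset _ _,
    fun j k hjk => (disjoint_image_iff Subtype.val_injective).2 (hUd hjk)⟩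

/-- The closed graph property of `T` at `0`. By linearity it gives the closed graph property
everywhere. -/
lemma IsBisep.eq_zero_of_tendsto [Nontrivial E] [Nontrivial F] (hT : IsBisep 𝕂 T)
    (hY : ∀ y : Y, ¬ IsOpen ({y} : Set Y)) (f : ℕ → X → E) (a : ℕ → ℝ)
    (hf : ∀ n, LipBd (a n) (f n)) (ha : Tendsto a atTop (𝓝 0)) (g : Y → F) (hg : Continuous g)
    (hlim : ∀ y, Tendsto (fun n => T (f n) y) atTop (𝓝 (g y))) : g = 0 := by
  by_contra hg0
  obtain ⟨y₀, hy₀⟩ := Function.ne_iff.1 hg0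
  have hVo : IsOpen (coz g) := isOpen_ne_fun hg continuous_const
  obtain ⟨V, hVo, hVne, hVg, hVd⟩ := exists_seq_disjoint_open hY hVo ⟨y₀, hy₀⟩
  choose v hv using hVne
  choose u hu huv huV using fun k => exists_bump (E := F) 𝕂 (hVo k) (hv k)
  choose p hp hpu using fun k => hT.surj (u k) (hu k)
  have hp0 : ∀ k, p k ≠ 0 := fun k h => by
    apply huv k
    rw [← hpu k, h, hT.map_zero]; rfl
  choose φ K y hφ h1 hφp hy hloc using fun k => hT.exists_localization (hp k) (hp0 k)
  have hgy : ∀ k, 0 < ‖g (y k)‖ := fun k => by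
    rw [norm_pos_iff]
    have h2 : y k ∈ coz (u k) := by
      have := hy k
      rwa [hpu k] at this
    exact hVg k (huV k h2)
  have hpd : ∀ j k, j ≠ k → coz (p j) ∩ coz (p k) = ∅ := fun j k hjk => by
    refine hT.sep_inv _ _ (hp j) (hp k) ?_
    rw [hpu, hpu]
    exact ((hVd j k hjk).mono (huV j) (huV k)).inter_eq
  -- `c k` rescales values of norm close to `‖g (y k)‖` to values of norm at least `k`.
  let c : ℕ → ℝ := fun k => 2 * (k / ‖g (y k)‖)
  have hc : ∀ k, 0 ≤ c k := fun k => by have := hgy k; positivity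
  have hN : ∀ k, ∃ n, c k * (a n * (1 + K k)) ≤ 1 ∧ ‖g (y k)‖ / 2 ≤ ‖T (f n) (y k)‖ := by
    intro k
    have t1 : Tendsto (fun n => c k * (a n * (1 + K k))) atTop (𝓝 0) := by
      simpa using (ha.mul_const (1 + (K k : ℝ))).const_mul (c k)
    have t2 := (hlim (y k)).norm
    exact ((t1.eventually (ge_mem_nhds zero_lt_one)).and
      (t2.eventually (le_mem_nhds (half_lt_self (hgy k))))).exists
  choose n hn1 hn2 using hN
  let G : ℕ → X → E := fun k => (c k : 𝕂) • fun x => (φ k x : 𝕂) • f (n k) x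
  have hφf : ∀ k, LipBd (a (n k) * (1 + K k)) (fun x => (φ k x : 𝕂) • f (n k) x) :=
    fun k => (hf (n k)).cutoff_smul (hφ k) (h1 k)
  have hG : ∀ k, LipBd 1 (G k) := fun k => by
    refine ((hφf k).smul (c k : 𝕂)).mono ?_
    rw [RCLike.norm_ofReal, abs_of_nonneg (hc k)]
    exact hn1 k
  have hGp : ∀ k, coz (G k) ⊆ coz (p k) := fun k x hx hpx => hx (by simp [G, hφp k x hpx])
  obtain ⟨C, hC⟩ := hT.exists_bound_of_disjoint G hG fun j k hjk =>
    subset_empty_iff.1 ((inter_subset_inter (hGp j) (hGp k)).trans (hpd j k hjk).subset)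
  obtain ⟨k, hk⟩ := exists_nat_gt C
  have h3 := hC k (y k)
  have h4 : T (G k) (y k) = (c k : 𝕂) • T (f (n k)) (y k) := by
    rw [hT.map_smul _ _ (hφf k).isLip, Pi.smul_apply, hloc k _ (hf (n k)).isLip]
  rw [h4, norm_smul, RCLike.norm_ofReal, abs_of_nonneg (hc k)] at h3
  have h5 := mul_le_mul_of_nonneg_left (hn2 k) (hc k)
  have h6 : c k * (‖g (y k)‖ / 2) = k := by
    have := (hgy k).ne'
    simp only [c]; field_simp
  linarith

end Bisep

/-! ### The Banach space of bounded Lipschitz functions -/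

section LipSpace

variable (𝕂 X E : Type*) [RCLike 𝕂] [PseudoMetricSpace X] [NormedAddCommGroup E]
  [NormedSpace 𝕂 E]

/-- The Banach space `Lip(X,E)`, realized inside `ℓ^∞(X ⊕ X × X, E)` by sending `f` to the family
of its values together with its difference quotients `(f x - f x') / d(x, x')`. The quotient is `0`
for `d(x, x') = 0`, as in `lipNorm`. -/
def LipSpace : Submodule 𝕂 (lp (fun _ : X ⊕ X × X => E) ⊤) where
  carrier := {u | ∀ x x' : X, u (Sum.inr (x, x')) =
    ((dist x x' : ℝ) : 𝕂)⁻¹ • (u (Sum.inl x) - u (Sum.inl x'))}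
  add_mem' := by
    intro u v hu hv x x'
    simp only [lp.coeFn_add, Pi.add_apply, hu x x', hv x x', ← smul_add]
    congr 1; abel
  zero_mem' := by intro x x'; simp
  smul_mem' := by
    intro c u hu x x'
    simp only [lp.coeFn_smul, Pi.smul_apply, hu x x', ← smul_sub]
    rw [smul_comm]

variable {𝕂 X E}

lemma LipSpace.isClosed : IsClosed (LipSpace 𝕂 X E : Set (lp (fun _ : X ⊕ X × X => E) ⊤)) := by
  have hev : ∀ i, Continuous fun u : lp (fun _ : X ⊕ X × X => E) ⊤ => u i := fun i =>
    (lp.evalCLM 𝕂 (fun _ : X ⊕ X × X => E) ⊤ i).continuous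
  have : (LipSpace 𝕂 X E : Set (lp (fun _ : X ⊕ X × X => E) ⊤)) = ⋂ x, ⋂ x',
      {u | u (Sum.inr (x, x')) =
        ((dist x x' : ℝ) : 𝕂)⁻¹ • (u (Sum.inl x) - u (Sum.inl x'))} := by
    ext u; simp only [mem_iInter]; rfl
  rw [this]
  exact isClosed_iInter fun x => isClosed_iInter fun x' =>
    isClosed_eq (hev _) (((hev _).sub (hev _)).const_smul _)

instance [CompleteSpace E] : CompleteSpace (LipSpace 𝕂 X E) :=
  LipSpace.isClosed.completeSpace_coe

/-- The function represented by an element of `LipSpace`. -/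
def lipFn (u : LipSpace 𝕂 X E) : X → E := fun x => u.1 (Sum.inl x)

end LipSpace

section LipSpaceMetric

variable {𝕂 X E : Type*} [RCLike 𝕂] [MetricSpace X] [NormedAddCommGroup E] [NormedSpace 𝕂 E]

lemma lipFn_lipBd (u : LipSpace 𝕂 X E) : LipBd ‖u‖ (lipFn u) := by
  refine ⟨fun x => lp.norm_apply_le_norm ENNReal.top_ne_zero u.1 _, fun x y => ?_⟩
  rcases eq_or_ne x y with rfl | hxy
  · simp
  · have h := lp.norm_apply_le_norm ENNReal.top_ne_zero u.1 (Sum.inr (x, y))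
    have hd : 0 < dist x y := dist_pos.2 hxy
    rw [u.2 x y, norm_smul, norm_inv, RCLike.norm_ofReal, abs_of_pos hd, inv_mul_le_iff₀ hd,
      mul_comm] at h
    exact h

lemma lipFn_injective : Function.Injective (lipFn : LipSpace 𝕂 X E → X → E) := by
  intro u v h
  apply Subtype.ext
  apply lp.ext
  have h' : ∀ x, u.1 (Sum.inl x) = v.1 (Sum.inl x) := fun x => congrFun h x
  funext i
  rcases i with x | ⟨x, x'⟩
  · exact h' x
  · rw [u.2 x x', v.2 x x', h' x, h' x']

lemma LipBd.exists_fn_eq {M : ℝ} (hM : 0 ≤ M) {f : X → E} (hf : LipBd M f) :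
    ∃ u : LipSpace 𝕂 X E, lipFn u = f ∧ ‖u‖ ≤ M := by
  let w : X ⊕ X × X → E := Sum.elim f fun q => ((dist q.1 q.2 : ℝ) : 𝕂)⁻¹ • (f q.1 - f q.2)
  have hw : ∀ i, ‖w i‖ ≤ M := by
    rintro (x | ⟨x, y⟩)
    · exact hf.1 x
    · change ‖((dist x y : ℝ) : 𝕂)⁻¹ • (f x - f y)‖ ≤ M
      rcases eq_or_ne x y with rfl | hxy
      · simpa using hM
      · have hd : 0 < dist x y := dist_pos.2 hxy
        rw [norm_smul, norm_inv, RCLike.norm_ofReal, abs_of_pos hd, inv_mul_le_iff₀ hd, mul_comm]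
        exact hf.2 x y
  have hmem : Memℓp w ⊤ := memℓp_infty ⟨M, by rintro _ ⟨i, rfl⟩; exact hw i⟩
  exact ⟨⟨⟨w, hmem⟩, fun x x' => rfl⟩, rfl, lp.norm_le_of_forall_le hM hw⟩

lemma IsLip.exists_fn_eq {f : X → E} (hf : IsLip f) : ∃ u : LipSpace 𝕂 X E, lipFn u = f := by
  obtain ⟨M, hM, h⟩ := hf.exists_lipBd
  obtain ⟨u, hu, -⟩ := h.exists_fn_eq (𝕂 := 𝕂) hM
  exact ⟨u, hu⟩

lemma lipNorm_nonneg (f : X → E) : 0 ≤ lipNorm f :=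
  le_max_of_le_left (Real.iSup_nonneg fun _ => norm_nonneg _)

lemma LipBd.lipNorm_le {M : ℝ} (hM : 0 ≤ M) {f : X → E} (hf : LipBd M f) : lipNorm f ≤ M :=
  max_le (Real.iSup_le hf.1 hM)
    (Real.iSup_le (fun q => div_le_of_le_mul₀ dist_nonneg hM (hf.2 q.1 q.2)) hM)

lemma IsLip.lipBd_lipNorm {f : X → E} (hf : IsLip f) : LipBd (lipNorm f) f := by
  obtain ⟨M, hM, h⟩ := hf.exists_lipBd
  refine ⟨fun x => ?_, fun x y => ?_⟩
  · refine le_max_of_le_left (le_ciSup (f := fun x => ‖f x‖) ⟨M, ?_⟩ x)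
    rintro _ ⟨z, rfl⟩; exact h.1 z
  · rcases eq_or_ne x y with rfl | hxy
    · simp
    · rw [← div_le_iff₀ (dist_pos.2 hxy)]
      refine le_max_of_le_right
        (le_ciSup (f := fun q : X × X => ‖f q.1 - f q.2‖ / dist q.1 q.2) ⟨M, ?_⟩ (x, y))
      rintro _ ⟨q, rfl⟩
      exact div_le_of_le_mul₀ dist_nonneg hM (h.2 q.1 q.2)

end LipSpaceMetric

/-! ### Automatic continuity -/

/-- If `E`, `F` are Banach spaces, `T : Lip(X,E) → Lip(Y,F)` is biseparating
and `Y` has no isolated points, then `T` is continuous. -/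
theorem biseparating_automatic_continuity
    {𝕂 X Y E F : Type*} [RCLike 𝕂]
    [MetricSpace X] [CompleteSpace X] [MetricSpace Y] [CompleteSpace Y]
    [NormedAddCommGroup E] [NormedSpace 𝕂 E] [Nontrivial E] [CompleteSpace E]
    [NormedAddCommGroup F] [NormedSpace 𝕂 F] [Nontrivial F] [CompleteSpace F]
    (hXb : IsBounded (univ : Set X)) (hYb : IsBounded (univ : Set Y))
    (T : (X → E) → (Y → F)) (hT : IsBisep 𝕂 T)
    (hY : ∀ y : Y, ¬ IsOpen ({y} : Set Y)) :
    ∃ C : ℝ, 0 ≤ C ∧ ∀ f, IsLip f → lipNorm (T f) ≤ C * lipNorm f := by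
  choose S hS using fun u : LipSpace 𝕂 X E =>
    (hT.maps_lip (lipFn u) (lipFn_lipBd u).isLip).exists_fn_eq (𝕂 := 𝕂)
  let L : LipSpace 𝕂 X E →ₗ[𝕂] LipSpace 𝕂 Y F :=
    { toFun := S
      map_add' := fun u v => lipFn_injective <| by
        have e : lipFn (S u + S v) = lipFn (S u) + lipFn (S v) := rfl
        rw [hS, e, hS, hS, ← hT.map_add _ _ (lipFn_lipBd u).isLip (lipFn_lipBd v).isLip]
        rfl
      map_smul' := fun c u => lipFn_injective <| by
        have e : lipFn (c • S u) = c • lipFn (S u) := rfl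
        rw [RingHom.id_apply, hS, e, hS, ← hT.map_smul c _ (lipFn_lipBd u).isLip]
        rfl }
  have hL : ∀ u, lipFn (L u) = T (lipFn u) := hS
  have hcont : Continuous L := by
    refine L.continuous_of_seq_closed_graph fun u x y hu hy => ?_
    have hdiff : ∀ n, T (lipFn (u n - x)) = lipFn (L (u n) - L x) := fun n => by
      rw [← hL, map_sub]
    have key : lipFn (y - L x) = 0 := by
      refine hT.eq_zero_of_tendsto hY (fun n => lipFn (u n - x)) (fun n => ‖u n - x‖)
        (fun n => lipFn_lipBd (u n - x)) (tendsto_iff_norm_sub_tendsto_zero.1 hu) _ ?_ fun z => ?_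
      · obtain ⟨⟨K, hK⟩, -⟩ := (lipFn_lipBd (y - L x)).isLip
        exact hK.continuous
      · simp only [hdiff]
        have h1 : Tendsto (fun n => L (u n) - L x) atTop (𝓝 (y - L x)) := hy.sub_const _
        rw [tendsto_iff_norm_sub_tendsto_zero] at h1 ⊢
        exact squeeze_zero (fun _ => norm_nonneg _)
          (fun n => (lipFn_lipBd (L (u n) - L x - (y - L x))).1 z) h1
    exact sub_eq_zero.1 (lipFn_injective key)
  let A : LipSpace 𝕂 X E →L[𝕂] LipSpace 𝕂 Y F := ⟨L, hcont⟩
  refine ⟨‖A‖, A.opNorm_nonneg, fun f hf => ?_⟩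
  obtain ⟨u, rfl, hu⟩ := hf.lipBd_lipNorm.exists_fn_eq (𝕂 := 𝕂) (lipNorm_nonneg f)
  rw [← hL]
  calc lipNorm (lipFn (L u)) ≤ ‖A u‖ := (lipFn_lipBd (L u)).lipNorm_le (norm_nonneg _)
    _ ≤ ‖A‖ * ‖u‖ := A.le_opNorm u
    _ ≤ ‖A‖ * lipNorm (lipFn u) := mul_le_mul_of_nonneg_left hu A.opNorm_nonneg
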